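/- arXiv:1911.03467 — 2 statements merged into one kernel-verified Lean document; each statement's English description precedes it below -/
import Mathlib

section
/- Let C be a copula, let φ = φ(C) = 6·∫₀¹ C(u,u) du − 2 and β(C) = 4·C(1/2,1/2) − 1. Then φ ∈ [−1/2, 1], and β(C) ≥ 1 − 4·√((1−φ)/6); moreover β(C) is bounded above by 1 if 1/4 ≤ φ ≤ 1 and by −1 + 4·√((1+2φ)/6) if φ < 1/4. -/
/-- A (bivariate) copula: boundary conditions on `[0,1]` and the 2-increasing property. -/
def IsCopula (C : ℝ → ℝ → ℝ) : Prop :=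
  (∀ u ∈ Set.Icc (0:ℝ) 1, C u 0 = 0 ∧ C 0 u = 0 ∧ C u 1 = u ∧ C 1 u = u) ∧
  (∀ u₁ u₂ v₁ v₂ : ℝ, 0 ≤ u₁ → u₁ ≤ u₂ → u₂ ≤ 1 → 0 ≤ v₁ → v₁ ≤ v₂ → v₂ ≤ 1 →
    0 ≤ C u₁ v₁ + C u₂ v₂ - C u₁ v₂ - C u₂ v₁)

/-- Spearman's footrule of a copula. -/
noncomputable def footrule (C : ℝ → ℝ → ℝ) : ℝ :=
  6 * (∫ u in (0:ℝ)..1, C u u) - 2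

/-- Blomqvist's beta of a copula. -/
noncomputable def blomqvistBeta (C : ℝ → ℝ → ℝ) : ℝ :=
  4 * C (1/2) (1/2) - 1

/-!
Only the diagonal section `δ u = C u u` matters. Its increments over `[u, v]` lie between `0` and
`2 (v - u)`, so the functions `u - δ u`, `δ u` and `δ u - (2 u - 1)`, all nonnegative on `[0, 1]`,
have bounded slope. Hence a large value of one of them at a point forces a triangle below its graph,
whose area bounds its integral from below. The triangles below `u - δ u` give an upper bound for
`∫ δ` in terms of `δ a`, and those below `δ u` on `[0, a]` and `δ u - (2 u - 1)` on `[a, 1]` give a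
lower bound; the theorem is the case `a = 1/2`, solved for `δ (1/2)`.
-/

open MeasureTheory Set

section TriangleArea

variable {f : ℝ → ℝ} {a b s K : ℝ}

theorem integral_mul_sub_left_endpoint (K s b : ℝ) :
    ∫ u in s..b, K * (u - s) = K * (b - s) ^ 2 / 2 := by
  rw [intervalIntegral.integral_const_mul,
    intervalIntegral.integral_comp_sub_right (fun u => u), integral_id]
  ring

theorem mul_sq_div_two_le_integral_of_rising_ramp_le (has : a ≤ s) (hsb : s ≤ b)
    (hf : IntervalIntegrable f volume a b) (f_nonneg : ∀ u ∈ Icc a b, 0 ≤ f u)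
    (ramp_le : ∀ u ∈ Icc s b, K * (u - s) ≤ f u) :
    K * (b - s) ^ 2 / 2 ≤ ∫ u in a..b, f u := by
  have hf_sb : IntervalIntegrable f volume s b :=
    hf.mono_set (by
      rw [uIcc_of_le hsb, uIcc_of_le (has.trans hsb)]
      exact Icc_subset_Icc_left has)
  calc K * (b - s) ^ 2 / 2
      = ∫ u in s..b, K * (u - s) := (integral_mul_sub_left_endpoint K s b).symm
    _ ≤ ∫ u in s..b, f u :=
        intervalIntegral.integral_mono_on hsb
          (Continuous.intervalIntegrable (by fun_prop) _ _) hf_sb ramp_le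
    _ ≤ ∫ u in a..b, f u :=
        intervalIntegral.integral_mono_interval has hsb le_rfl
          (ae_restrict_of_forall_mem measurableSet_Ioc
            fun u hu => f_nonneg u (Ioc_subset_Icc_self hu)) hf

theorem mul_sq_div_two_le_integral_of_falling_ramp_le (has : a ≤ s) (hsb : s ≤ b)
    (hf : IntervalIntegrable f volume a b) (f_nonneg : ∀ u ∈ Icc a b, 0 ≤ f u)
    (ramp_le : ∀ u ∈ Icc a s, K * (s - u) ≤ f u) :
    K * (s - a) ^ 2 / 2 ≤ ∫ u in a..b, f u := by
  have hf_neg : IntervalIntegrable (fun u => f (-u)) volume (-b) (-a) := by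
    simpa using (hf.comp_sub_left 0).symm
  have reflected := mul_sq_div_two_le_integral_of_rising_ramp_le (K := K)
    (neg_le_neg hsb) (neg_le_neg has) hf_neg
    (fun u hu => f_nonneg (-u) ⟨le_neg_of_le_neg hu.2, neg_le_of_neg_le hu.1⟩)
    (fun u hu => by
      have := ramp_le (-u) ⟨le_neg_of_le_neg hu.2, neg_le_of_neg_le hu.1⟩
      rwa [sub_neg_eq_add, add_comm, ← sub_neg_eq_add] at this)
  rwa [intervalIntegral.integral_comp_neg, neg_neg, neg_neg, neg_sub_neg] at reflected

end TriangleArea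

/-- The functions that occur as diagonal sections `u ↦ C u u` of bivariate copulas; the
footrule and Blomqvist's beta of `C` depend only on this section. The values of `δ` outside `[0, 1]`
are arbitrary. -/
structure IsDiagonalSection (δ : ℝ → ℝ) : Prop where
  map_zero : δ 0 = 0
  map_one : δ 1 = 1
  le_self : ∀ u ∈ Icc (0 : ℝ) 1, δ u ≤ u
  monotoneOn : MonotoneOn δ (Icc 0 1)
  sub_le : ∀ u ∈ Icc (0 : ℝ) 1, ∀ v ∈ Icc (0 : ℝ) 1, u ≤ v → δ v - δ u ≤ 2 * (v - u)

namespace IsDiagonalSection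

variable {δ : ℝ → ℝ} {a b u : ℝ}

theorem nonneg (hδ : IsDiagonalSection δ) (hu : u ∈ Icc (0 : ℝ) 1) : 0 ≤ δ u :=
  hδ.map_zero.symm.le.trans (hδ.monotoneOn (left_mem_Icc.2 zero_le_one) hu hu.1)

theorem two_mul_sub_one_le (hδ : IsDiagonalSection δ) (hu : u ∈ Icc (0 : ℝ) 1) :
    2 * u - 1 ≤ δ u := by
  have := hδ.sub_le u hu 1 (right_mem_Icc.2 zero_le_one) hu.2
  rw [hδ.map_one] at this
  linarith

theorem intervalIntegrable (hδ : IsDiagonalSection δ) (ha : a ∈ Icc (0 : ℝ) 1)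
    (hb : b ∈ Icc (0 : ℝ) 1) : IntervalIntegrable δ volume a b :=
  (hδ.monotoneOn.mono (ordConnected_Icc.uIcc_subset ha hb)).intervalIntegrable

theorem integral_add_integral (hδ : IsDiagonalSection δ) (ha : a ∈ Icc (0 : ℝ) 1) :
    (∫ u in (0 : ℝ)..a, δ u) + ∫ u in a..1, δ u = ∫ u in (0 : ℝ)..1, δ u :=
  intervalIntegral.integral_add_adjacent_intervals
    (hδ.intervalIntegrable (left_mem_Icc.2 zero_le_one) ha)
    (hδ.intervalIntegrable ha (right_mem_Icc.2 zero_le_one))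

theorem integral_zero_to_le (hδ : IsDiagonalSection δ) (ha : a ∈ Icc (0 : ℝ) 1) :
    ∫ u in (0 : ℝ)..a, δ u ≤ a ^ 2 / 2 - (a - δ a) ^ 2 / 2 := by
  have hδ_int := hδ.intervalIntegrable (left_mem_Icc.2 zero_le_one) ha
  have id_int : IntervalIntegrable (fun u : ℝ => u) volume 0 a :=
    intervalIntegral.intervalIntegrable_id
  have ramp_le : ∀ u ∈ Icc (δ a) a, 1 * (u - δ a) ≤ u - δ u := fun u hu => by
    have := hδ.monotoneOn ⟨(hδ.nonneg ha).trans hu.1, hu.2.trans ha.2⟩ ha hu.2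
    linarith
  have triangle := mul_sq_div_two_le_integral_of_rising_ramp_le
    (hδ.nonneg ha) (hδ.le_self a ha) (id_int.sub hδ_int)
    (fun u hu => sub_nonneg.2 (hδ.le_self u ⟨hu.1, hu.2.trans ha.2⟩)) ramp_le
  rw [intervalIntegral.integral_sub id_int hδ_int, integral_id] at triangle
  linarith

theorem integral_to_one_le (hδ : IsDiagonalSection δ) (ha : a ∈ Icc (0 : ℝ) 1) :
    ∫ u in a..1, δ u ≤ (1 - a ^ 2) / 2 - (a - δ a) ^ 2 / 2 := by
  have hδ_int := hδ.intervalIntegrable ha (right_mem_Icc.2 zero_le_one)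
  have id_int : IntervalIntegrable (fun u : ℝ => u) volume a 1 :=
    intervalIntegral.intervalIntegrable_id
  have foot_le_one : 2 * a - δ a ≤ 1 := by linarith [hδ.two_mul_sub_one_le ha]
  have ramp_le : ∀ u ∈ Icc a (2 * a - δ a), 1 * (2 * a - δ a - u) ≤ u - δ u := fun u hu => by
    have := hδ.sub_le a ha u ⟨ha.1.trans hu.1, hu.2.trans foot_le_one⟩ hu.1
    linarith
  have triangle := mul_sq_div_two_le_integral_of_falling_ramp_le
    (by linarith [hδ.le_self a ha]) foot_le_one (id_int.sub hδ_int)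
    (fun u hu => sub_nonneg.2 (hδ.le_self u ⟨ha.1.trans hu.1, hu.2⟩)) ramp_le
  rw [intervalIntegral.integral_sub id_int hδ_int, integral_id] at triangle
  linarith

theorem integral_le (hδ : IsDiagonalSection δ) (ha : a ∈ Icc (0 : ℝ) 1) :
    ∫ u in (0 : ℝ)..1, δ u ≤ 1 / 2 - (a - δ a) ^ 2 := by
  linarith [hδ.integral_add_integral ha, hδ.integral_zero_to_le ha, hδ.integral_to_one_le ha]

theorem le_integral_zero_to (hδ : IsDiagonalSection δ) (ha : a ∈ Icc (0 : ℝ) 1) :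
    δ a ^ 2 / 4 ≤ ∫ u in (0 : ℝ)..a, δ u := by
  have foot_nonneg : 0 ≤ a - δ a / 2 := by linarith [hδ.nonneg ha, hδ.le_self a ha]
  have ramp_le : ∀ u ∈ Icc (a - δ a / 2) a, 2 * (u - (a - δ a / 2)) ≤ δ u := fun u hu => by
    have := hδ.sub_le u ⟨foot_nonneg.trans hu.1, hu.2.trans ha.2⟩ a ha hu.2
    linarith
  have triangle := mul_sq_div_two_le_integral_of_rising_ramp_le
    foot_nonneg (by linarith [hδ.nonneg ha])
    (hδ.intervalIntegrable (left_mem_Icc.2 zero_le_one) ha)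
    (fun u hu => hδ.nonneg ⟨hu.1, hu.2.trans ha.2⟩) ramp_le
  linarith

theorem le_integral_to_one (hδ : IsDiagonalSection δ) (ha : a ∈ Icc (0 : ℝ) 1) :
    a - a ^ 2 + (1 + δ a - 2 * a) ^ 2 / 4 ≤ ∫ u in a..1, δ u := by
  have hδ_int := hδ.intervalIntegrable ha (right_mem_Icc.2 zero_le_one)
  have line_int : IntervalIntegrable (fun u : ℝ => 2 * u - 1) volume a 1 :=
    Continuous.intervalIntegrable (by fun_prop) _ _
  have integral_line : ∫ u in a..1, (2 * u - 1) = a - a ^ 2 := by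
    rw [intervalIntegral.integral_sub (Continuous.intervalIntegrable (by fun_prop) _ _)
      intervalIntegrable_const, intervalIntegral.integral_const_mul, integral_id,
      intervalIntegral.integral_const, smul_eq_mul]
    ring
  have foot_le_one : (1 + δ a) / 2 ≤ 1 := by linarith [hδ.le_self a ha, ha.2]
  have ramp_le : ∀ u ∈ Icc a ((1 + δ a) / 2),
      2 * ((1 + δ a) / 2 - u) ≤ δ u - (2 * u - 1) := fun u hu => by
    have := hδ.monotoneOn ha ⟨ha.1.trans hu.1, hu.2.trans foot_le_one⟩ hu.1
    linarith
  have triangle := mul_sq_div_two_le_integral_of_falling_ramp_le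
    (by linarith [hδ.two_mul_sub_one_le ha]) foot_le_one (hδ_int.sub line_int)
    (fun u hu => sub_nonneg.2 (hδ.two_mul_sub_one_le ⟨ha.1.trans hu.1, hu.2⟩)) ramp_le
  rw [intervalIntegral.integral_sub hδ_int line_int, integral_line] at triangle
  linarith

theorem le_integral (hδ : IsDiagonalSection δ) (ha : a ∈ Icc (0 : ℝ) 1) :
    1 / 4 + δ a * (1 + δ a - 2 * a) / 2 ≤ ∫ u in (0 : ℝ)..1, δ u := by
  linarith [hδ.integral_add_integral ha, hδ.le_integral_zero_to ha, hδ.le_integral_to_one ha]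

end IsDiagonalSection

namespace IsCopula

variable {C : ℝ → ℝ → ℝ} {a u u₁ u₂ v : ℝ}

theorem swap (hC : IsCopula C) : IsCopula (fun u v => C v u) := by
  refine ⟨fun u hu => ?_, fun u₁ u₂ v₁ v₂ hu₁ hu hu₂ hv₁ hv hv₂ => ?_⟩
  · obtain ⟨right_zero, left_zero, right_one, left_one⟩ := hC.1 u hu
    exact ⟨left_zero, right_zero, left_one, right_one⟩
  · linarith [hC.2 v₁ v₂ u₁ u₂ hv₁ hv hv₂ hu₁ hu hu₂]

theorem apply_zero_right (hC : IsCopula C) (hu : u ∈ Icc (0 : ℝ) 1) : C u 0 = 0 :=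
  (hC.1 u hu).1

theorem apply_one_right (hC : IsCopula C) (hu : u ∈ Icc (0 : ℝ) 1) : C u 1 = u :=
  (hC.1 u hu).2.2.1

theorem apply_one_left (hC : IsCopula C) (hu : u ∈ Icc (0 : ℝ) 1) : C 1 u = u :=
  hC.swap.apply_one_right hu

theorem mono_left (hC : IsCopula C) (hu₁ : u₁ ∈ Icc (0 : ℝ) 1) (hu₂ : u₂ ∈ Icc (0 : ℝ) 1)
    (hv : v ∈ Icc (0 : ℝ) 1) (hu : u₁ ≤ u₂) : C u₁ v ≤ C u₂ v := by
  have := hC.2 u₁ u₂ 0 v hu₁.1 hu hu₂.2 le_rfl hv.1 hv.2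
  rw [hC.apply_zero_right hu₁, hC.apply_zero_right hu₂] at this
  linarith

theorem sub_le_left (hC : IsCopula C) (hu₁ : u₁ ∈ Icc (0 : ℝ) 1) (hu₂ : u₂ ∈ Icc (0 : ℝ) 1)
    (hv : v ∈ Icc (0 : ℝ) 1) (hu : u₁ ≤ u₂) : C u₂ v - C u₁ v ≤ u₂ - u₁ := by
  have := hC.2 u₁ u₂ v 1 hu₁.1 hu hu₂.2 hv.1 hv.2 le_rfl
  rw [hC.apply_one_right hu₁, hC.apply_one_right hu₂] at this
  linarith

theorem isDiagonalSection (hC : IsCopula C) : IsDiagonalSection (fun u => C u u) where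
  map_zero := hC.apply_zero_right (left_mem_Icc.2 zero_le_one)
  map_one := hC.apply_one_right (right_mem_Icc.2 zero_le_one)
  le_self u hu :=
    (hC.mono_left hu (right_mem_Icc.2 zero_le_one) hu hu.2).trans_eq (hC.apply_one_left hu)
  monotoneOn u hu v hv huv :=
    (hC.mono_left hu hv hu huv).trans (hC.swap.mono_left hu hv hv huv)
  sub_le u hu v hv huv := by
    linarith [hC.sub_le_left hu hv hu huv, hC.swap.sub_le_left hu hv hv huv]

theorem footrule_le (hC : IsCopula C) (ha : a ∈ Icc (0 : ℝ) 1) :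
    footrule C ≤ 1 - 6 * (a - C a a) ^ 2 := by
  unfold footrule
  linarith [hC.isDiagonalSection.integral_le ha]

theorem le_footrule (hC : IsCopula C) (ha : a ∈ Icc (0 : ℝ) 1) :
    -(1 / 2) + 3 * (C a a * (1 + C a a - 2 * a)) ≤ footrule C := by
  unfold footrule
  linarith [hC.isDiagonalSection.le_integral ha]

end IsCopula

/-- Bounds for Blomqvist's beta of a copula in terms of its Spearman's footrule `φ`;
moreover `φ ∈ [−1/2, 1]`. -/
theorem beta_bounds_of_footrule (C : ℝ → ℝ → ℝ) (hC : IsCopula C) :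
    footrule C ∈ Set.Icc (-(1/2) : ℝ) 1 ∧
    1 - 4 * Real.sqrt ((1 - footrule C) / 6) ≤ blomqvistBeta C ∧
    blomqvistBeta C ≤
      (if (1/4 : ℝ) ≤ footrule C then (1 : ℝ)
      else -1 + 4 * Real.sqrt ((1 + 2 * footrule C) / 6)) := by
  have half_mem : (1 / 2 : ℝ) ∈ Icc (0 : ℝ) 1 := by norm_num
  have footrule_le := hC.footrule_le half_mem
  have le_footrule := hC.le_footrule half_mem
  have diag_le_half : C (1 / 2) (1 / 2) ≤ 1 / 2 := hC.isDiagonalSection.le_self _ half_mem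
  have half_sub_diag_le : 1 / 2 - C (1 / 2) (1 / 2) ≤ √((1 - footrule C) / 6) :=
    Real.le_sqrt_of_sq_le (by linarith)
  have diag_le : C (1 / 2) (1 / 2) ≤ √((1 + 2 * footrule C) / 6) :=
    Real.le_sqrt_of_sq_le (by linarith)
  refine ⟨⟨?_, ?_⟩, ?_, ?_⟩
  · linarith [sq_nonneg (C (1 / 2) (1 / 2))]
  · linarith [sq_nonneg (1 / 2 - C (1 / 2) (1 / 2))]
  · unfold blomqvistBeta
    linarith
  · unfold blomqvistBeta
    split_ifs <;> linarith
end

section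
/- Let a, b ∈ [0,1] and 0 ≤ c ≤ min{a, b, 1−a, 1−b, |b−a|}, and set d₁ = max(a+b−1,0) + c. Then the concordance of the independence copula Π with C̲^{a,b,c} satisfies Q(Π, C̲^{a,b,c}) = 4·∫₀¹∫₀¹ C̲^{a,b,c}(u,v) du dv − 1 = 2d₁(1−a−b+d₁)(1−a−b+2d₁) − 1/3. -/
/-- The lower bound copula `C̲^{a,b,c}` of the asymmetry construction, where
`d₁ = max(a+b−1,0) + c`. -/
noncomputable def CLow (a b c u v : ℝ) : ℝ :=
  max (max (u + v - 1) 0)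
    (min (min (max (a + b - 1) 0 + c) (u - a + (max (a + b - 1) 0 + c)))
      (min (v - b + (max (a + b - 1) 0 + c)) (u + v - a - b + (max (a + b - 1) 0 + c))))

/-!
Write `d = d₁`. The copula is the maximum of `W(u,v) = max(u+v−1,0)` and
`min(a,u) + min(b,v) − (a+b−d)`. For fixed `u`, the region between the graphs of the section
`v ↦ C̲^{a,b,c}(u,v)` and of `W(u,·)` is a parallelogram with two horizontal sides, of height
`min(a,u) − (a−d)` and horizontal width `(1−b+d) − max(a,u)` (empty if one of these is negative).
As a function of `u` its area is a tent with base `[a−d, 1−b+d]` and peak `d(1−a−b+d)` at `u = a`,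
so the copula exceeds `W` by `d(1−a−b+d)(1−a−b+2d)/2` on average, while `W` has mean `1/6`.
-/

open intervalIntegral

section Ramp

variable {s t p q m : ℝ}

theorem integral_max_sub_zero (hsp : s ≤ p) (hpt : p ≤ t) :
    ∫ v in s..t, max (v - p) 0 = (t - p) ^ 2 / 2 := by
  have hcont : Continuous fun v : ℝ => max (v - p) 0 := by fun_prop
  have left_of_knot : ∫ v in s..p, max (v - p) 0 = 0 := by
    rw [integral_congr (g := fun _ => 0), integral_zero]
    intro v hv
    rw [Set.uIcc_of_le hsp] at hv
    exact max_eq_right (sub_nonpos.2 hv.2)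
  have right_of_knot : ∫ v in p..t, max (v - p) 0 = ∫ v in p..t, (v - p) := by
    refine integral_congr fun v hv => ?_
    rw [Set.uIcc_of_le hpt] at hv
    exact max_eq_left (sub_nonneg.2 hv.1)
  rw [← integral_add_adjacent_intervals (hcont.intervalIntegrable s p)
    (hcont.intervalIntegrable p t), left_of_knot, right_of_knot,
    integral_comp_sub_right (fun x => x), integral_id]
  ring

theorem max_ramp_min_sub_eq_ramps (hpm : p ≤ m) (hpq : p ≤ q) (v : ℝ) :
    max (max (v - q) 0) (min m v - p)
      = max (v - p) 0 - max (v - m) 0 + max (v - (q + m - p)) 0 := by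
  grind

theorem max_ramp_min_sub_eq_ramp (h : m ≤ p ∨ q ≤ p) (v : ℝ) :
    max (max (v - q) 0) (min m v - p) = max (v - q) 0 := by
  refine max_eq_left ?_
  rcases h with hmp | hqp
  · exact le_max_of_le_right (by linarith [min_le_left m v])
  · exact le_max_of_le_left (by linarith [min_le_right m v])

theorem integral_max_ramp_min_sub (hsp : s ≤ p) (hsq : s ≤ q) (hqt : q ≤ t)
    (hqmt : q + m - p ≤ t) :
    ∫ v in s..t, max (max (v - q) 0) (min m v - p)
      = (t - q) ^ 2 / 2 + max (m - p) 0 * max (q - p) 0 := by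
  by_cases h : m ≤ p ∨ q ≤ p
  · have no_excess : max (m - p) 0 * max (q - p) 0 = 0 := by
      rcases h with hmp | hqp
      · rw [max_eq_right (sub_nonpos.2 hmp), zero_mul]
      · rw [max_eq_right (sub_nonpos.2 hqp), mul_zero]
    simp only [max_ramp_min_sub_eq_ramp h, integral_max_sub_zero hsq hqt, no_excess, add_zero]
  · obtain ⟨hpm, hpq⟩ : p < m ∧ p < q := by simpa only [not_or, not_le] using h
    simp only [max_ramp_min_sub_eq_ramps hpm.le hpq.le]
    rw [integral_add, integral_sub,
      integral_max_sub_zero hsp (by linarith), integral_max_sub_zero (by linarith) (by linarith),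
      integral_max_sub_zero (by linarith) hqmt,
      max_eq_left (sub_nonneg.2 hpm.le), max_eq_left (sub_nonneg.2 hpq.le)]
    · ring
    all_goals exact Continuous.intervalIntegrable (by fun_prop) _ _

end Ramp

/-- For `p ≤ m ≤ r`, the tent function on the base `[p, r]`, rising linearly from `0` at `p` to
`(m - p) * (r - m)` at `m` and falling linearly to `0` at `r`. It is encoded as a product of two
truncated lengths because it arises as the area, height times width, of a parallelogram. -/
noncomputable def tent (p m r u : ℝ) : ℝ :=
  max (min m u - p) 0 * max (r - max m u) 0

section Tent

variable {s t p m r : ℝ}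

theorem continuous_tent : Continuous (tent p m r) := by
  unfold tent
  fun_prop

theorem tent_eq_ramps (hpm : p ≤ m) (hmr : m ≤ r) (u : ℝ) :
    tent p m r u
      = (r - m) * max (u - p) 0 - (r - p) * max (u - m) 0 + (m - p) * max (u - r) 0 := by
  unfold tent
  rcases le_total u m with hum | hmu
  · rw [min_eq_right hum, max_eq_left hum, max_eq_left (sub_nonneg.2 hmr),
      max_eq_right (sub_nonpos.2 hum), max_eq_right (sub_nonpos.2 (hum.trans hmr))]
    ring
  · rw [min_eq_left hmu, max_eq_right hmu, max_eq_left (sub_nonneg.2 hpm),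
      max_eq_left (sub_nonneg.2 hmu), max_eq_left (sub_nonneg.2 (hpm.trans hmu))]
    have reflect : max (r - u) 0 = r - u + max (u - r) 0 := by grind
    rw [reflect]
    ring

theorem integral_tent (hsp : s ≤ p) (hpm : p ≤ m) (hmr : m ≤ r) (hrt : r ≤ t) :
    ∫ u in s..t, tent p m r u = (m - p) * (r - m) * (r - p) / 2 := by
  simp only [tent_eq_ramps hpm hmr]
  rw [integral_add, integral_sub]
  · simp only [integral_const_mul]
    rw [integral_max_sub_zero hsp (by linarith), integral_max_sub_zero (by linarith) (by linarith),
      integral_max_sub_zero (by linarith) hrt]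
    ring
  all_goals exact Continuous.intervalIntegrable (by fun_prop) _ _

end Tent

section CLow

variable {a b c d : ℝ}

theorem CLow_eq_max_min_add_min (hd : d = max (a + b - 1) 0 + c) (u v : ℝ) :
    CLow a b c u v = max (max (u + v - 1) 0) (min a u + min b v - (a + b - d)) := by
  rw [CLow, ← hd]
  grind

theorem integral_CLow_right (hd : d = max (a + b - 1) 0 + c) (hda : d ≤ a)
    (hdb : d ≤ b) {u : ℝ} (hu : u ∈ Set.Icc (0 : ℝ) 1) :
    ∫ v in (0 : ℝ)..1, CLow a b c u v = u ^ 2 / 2 + tent (a - d) a (1 - b + d) u := by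
  obtain ⟨hu0, hu1⟩ := hu
  have section_eq (v : ℝ) : CLow a b c u v
      = max (max (v - (1 - u)) 0) (min b v - (a + b - d - min a u)) := by
    rw [CLow_eq_max_min_add_min hd]
    ring_nf
  have height_le : min a u - (a - d) ≤ u := by linarith [min_le_right a u]
  have height_eq : b - (a + b - d - min a u) = min a u - (a - d) := by ring
  have width_eq : 1 - u - (a + b - d - min a u) = 1 - b + d - max a u := by
    linarith [min_add_max a u]
  simp only [section_eq]
  rw [integral_max_ramp_min_sub (by linarith [min_le_left a u]) (by linarith) (by linarith)
    (by linarith), height_eq, width_eq, tent, sub_sub_cancel]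

end CLow

theorem Q_Pi_CLow_general (a b c : ℝ) (hc0 : 0 ≤ c)
    (hc : c ≤ min (min a b) (min (1 - a) (1 - b)))
    (d₁ : ℝ) (hd : d₁ = max (a + b - 1) 0 + c) :
    4 * (∫ u in (0 : ℝ)..1, ∫ v in (0 : ℝ)..1, CLow a b c u v) - 1
      = 2 * d₁ * (1 - a - b + d₁) * (1 - a - b + 2 * d₁) - 1 / 3 := by
  obtain ⟨hd0, hda, hdb, hab⟩ : 0 ≤ d₁ ∧ d₁ ≤ a ∧ d₁ ≤ b ∧ a + b - 1 ≤ d₁ := by grind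
  have integral_eq : ∫ u in (0 : ℝ)..1, ∫ v in (0 : ℝ)..1, CLow a b c u v
      = 1 / 6 + d₁ * (1 - a - b + d₁) * (1 - a - b + 2 * d₁) / 2 :=
    calc
      _ = ∫ u in (0 : ℝ)..1, (u ^ 2 / 2 + tent (a - d₁) a (1 - b + d₁) u) :=
        integral_congr fun u hu => integral_CLow_right hd hda hdb
          (by rwa [Set.uIcc_of_le zero_le_one] at hu)
      _ = (∫ u in (0 : ℝ)..1, u ^ 2 / 2) + ∫ u in (0 : ℝ)..1, tent (a - d₁) a (1 - b + d₁) u :=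
        integral_add (Continuous.intervalIntegrable (by fun_prop) _ _)
          (continuous_tent.intervalIntegrable _ _)
      _ = 1 / 6 + d₁ * (1 - a - b + d₁) * (1 - a - b + 2 * d₁) / 2 := by
        rw [integral_tent (by linarith) (by linarith) (by linarith) (by linarith),
          integral_div, integral_pow]
        norm_num
        ring
  rw [integral_eq]
  ring

/-- `Q(Π, C̲^{a,b,c}) = 2d₁(1−a−b+d₁)(1−a−b+2d₁) − 1/3`, where `Π` is the independence
copula whose induced measure is the Lebesgue measure on `[0,1]²`. -/
theorem Q_Pi_CLow (a b c : ℝ) (ha : a ∈ Set.Icc (0:ℝ) 1) (hb : b ∈ Set.Icc (0:ℝ) 1)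
    (hc0 : 0 ≤ c)
    (hc : c ≤ min (min a b) (min (min (1 - a) (1 - b)) |b - a|))
    (d₁ : ℝ) (hd : d₁ = max (a + b - 1) 0 + c) :
    4 * (∫ u in (0:ℝ)..1, ∫ v in (0:ℝ)..1, CLow a b c u v) - 1
      = 2 * d₁ * (1 - a - b + d₁) * (1 - a - b + 2 * d₁) - 1 / 3 :=
  Q_Pi_CLow_general a b c hc0 (hc.trans (min_le_min_left _ (min_le_left _ _))) d₁ hd
end
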